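/- Let Δ be a complete fan in ℝ^n. For every flag τ₀ ⊊ τ₁ ⊊ ⋯ ⊊ τ_k in Δ, the set d_{(τ₀,…,τ_k)} is homeomorphic to a closed Euclidean ball of dimension k. Moreover, the union of the sets d_{(τ₀,…,τ_k)} over all flags in Δ is the whole closed unit ball B. -/

import Mathlib

open scoped RealInnerProductSpace

noncomputable section

abbrev Euc (n : ℕ) := EuclideanSpace ℝ (Fin n)

/-- A vector of `ℝ^n` has integral coordinates. -/
def IsIntegralVec {n : ℕ} (x : Euc n) : Prop := ∀ i, ∃ m : ℤ, x i = (m : ℝ)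

/-- A rational polyhedral cone in `ℝ^n`. -/
def IsRatPolyCone {n : ℕ} (σ : Set (Euc n)) : Prop :=
  ∃ (k : ℕ) (v : Fin k → Euc n), (∀ i, IsIntegralVec (v i)) ∧
    σ = {x | ∃ lam : Fin k → ℝ, (∀ i, 0 ≤ lam i) ∧ x = ∑ i, lam i • v i}

/-- Strict convexity of a cone: `σ ∩ (−σ) = {0}`. -/
def IsStrictlyConvexCone {n : ℕ} (σ : Set (Euc n)) : Prop := σ ∩ (-σ) = {0}

/-- The dual cone. -/
def dualCone {n : ℕ} (σ : Set (Euc n)) : Set (Euc n) := {u | ∀ x ∈ σ, 0 ≤ ⟪u, x⟫}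

/-- The orthogonal of a cone. -/
def orthCone {n : ℕ} (σ : Set (Euc n)) : Set (Euc n) := {u | ∀ x ∈ σ, ⟪u, x⟫ = 0}

/-- `τ` is a face of `σ`. -/
def IsFaceOf {n : ℕ} (τ σ : Set (Euc n)) : Prop :=
  ∃ u ∈ dualCone σ, τ = σ ∩ {x | ⟪u, x⟫ = 0}

/-- The dimension of a cone: the dimension of its linear span. -/
def coneDim {n : ℕ} (σ : Set (Euc n)) : ℕ := Module.finrank ℝ (Submodule.span ℝ σ)

/-- A fan in `ℝ^n`. -/
structure IsFan {n : ℕ} (Δ : Set (Set (Euc n))) : Prop where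
  finite : Δ.Finite
  poly : ∀ σ ∈ Δ, IsRatPolyCone σ
  strictconv : ∀ σ ∈ Δ, IsStrictlyConvexCone σ
  face_mem : ∀ σ ∈ Δ, ∀ τ, IsFaceOf τ σ → τ ∈ Δ
  inter_face : ∀ σ ∈ Δ, ∀ τ ∈ Δ, IsFaceOf (σ ∩ τ) σ ∧ IsFaceOf (σ ∩ τ) τ

/-- A complete fan: the union of the cones is everything. -/
def IsCompleteFan {n : ℕ} (Δ : Set (Set (Euc n))) : Prop :=
  IsFan Δ ∧ ⋃₀ Δ = Set.univ

/-- A flag `τ₀ ⊊ τ₁ ⊊ ⋯ ⊊ τ_k` of cones in the fan `Δ`, where each `τ_i`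
is a proper face of `τ_{i+1}`. -/
def IsFlag {n : ℕ} (Δ : Set (Set (Euc n))) {k : ℕ} (τ : Fin (k + 1) → Set (Euc n)) : Prop :=
  (∀ i, τ i ∈ Δ) ∧
    ∀ i : Fin k, IsFaceOf (τ i.castSucc) (τ i.succ) ∧ τ i.castSucc ≠ τ i.succ

/-- `v_σ`: the sum of the unit vectors `u_ρ` over the one-dimensional cones
`ρ ∈ Δ` that are faces of `σ`; here `u : Set (Euc n) → Euc n` is a choice of
the unit vector of each one-dimensional cone. -/
def vVec {n : ℕ} (Δ : Set (Set (Euc n))) (u : Set (Euc n) → Euc n)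
    (σ : Set (Euc n)) : Euc n :=
  ∑ᶠ ρ ∈ {ρ | ρ ∈ Δ ∧ IsFaceOf ρ σ ∧ coneDim ρ = 1}, u ρ

/-- The choice function `u` assigns to every one-dimensional cone of `Δ` the
unique unit vector it contains. -/
def IsUnitVecChoice {n : ℕ} (Δ : Set (Set (Euc n))) (u : Set (Euc n) → Euc n) : Prop :=
  ∀ ρ ∈ Δ, coneDim ρ = 1 → u ρ ∈ ρ ∧ ‖u ρ‖ = 1

/-- The cone generated by finitely many vectors `w₀, …, w_{m−1}`. -/
def coneOf {n m : ℕ} (w : Fin m → Euc n) : Set (Euc n) :=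
  {x | ∃ μ : Fin m → ℝ, (∀ i, 0 ≤ μ i) ∧ x = ∑ i, μ i • w i}

open scoped Classical in
/-- The cell `d_{(τ₀,…,τ_k)}` of the ball associated to a flag in `Δ`. -/
def dSet {n : ℕ} (Δ : Set (Set (Euc n))) (u : Set (Euc n) → Euc n)
    {k : ℕ} (τ : Fin (k + 1) → Set (Euc n)) : Set (Euc n) :=
  if τ 0 = ({0} : Set (Euc n)) then
    (if k = 0 then {0}
     else coneOf (fun i : Fin k => vVec Δ u (τ i.succ)) ∩ Metric.closedBall (0 : Euc n) 1)
  else coneOf (fun i => vVec Δ u (τ i)) ∩ Metric.sphere (0 : Euc n) 1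

/-! Let `σ` be a nonzero cone of the fan and `x ∈ σ`. Pushing `x` back along `v_σ` until it is about
to leave `σ` writes `x = t • v_σ + y` with `t ≥ 0` and `y` in a proper face; iterating, `x` lies in
the cone over the vectors `v` of a flag, so the cells cover. The existence of an exit point in a
*face* needs Weyl's theorem that finitely generated cones are cut out by finitely many linear
inequalities, which comes from Fourier–Motzkin elimination. A linear form that is nonnegative on `σ`
and vanishes at `v_σ` vanishes on all rays of `σ`, hence on `σ`; so `v_σ` lies outside the span of
every proper face and the vectors `v` along a flag of nonzero cones are linearly independent. A cell
whose flag starts at `{0}` is therefore a compact convex set of dimension `k`, and any other cell is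
the radial image of a `k`-simplex that misses the origin. -/

section Weyl

open PointedCone

theorem mem_sup_hull_singleton {R N : Type*} [Ring R] [PartialOrder R] [IsOrderedRing R]
    [AddCommGroup N] [Module R N] {C : PointedCone R N} {w x : N} :
    x ∈ C ⊔ hull R {w} ↔ ∃ t : R, 0 ≤ t ∧ x - t • w ∈ C := by
  constructor
  · intro hx
    obtain ⟨y, hy, z, hz, rfl⟩ := Submodule.mem_sup.mp hx
    obtain ⟨t, rfl⟩ := Submodule.mem_span_singleton.mp hz
    exact ⟨t, t.2, by rwa [← Nonneg.mk_smul t.1 t.2, add_sub_cancel_right]⟩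
  · rintro ⟨t, ht, hx⟩
    exact Submodule.mem_sup.mpr ⟨_, hx, _,
      Submodule.mem_span_singleton.mpr ⟨⟨t, ht⟩, rfl⟩, sub_add_cancel _ _⟩

theorem dualFG_bot {R M N : Type*} [CommRing R] [PartialOrder R] [IsOrderedRing R]
    [AddCommGroup M] [Module R M] [AddCommGroup N] [Module R N] {p : M →ₗ[R] N →ₗ[R] R}
    [Module.Finite R M] (hp : Function.Injective p.flip) :
    (⊥ : PointedCone R N).DualFG p := by
  classical
  obtain ⟨s, hs⟩ := Module.Finite.fg_top (R := R) (M := M)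
  refine ⟨s ∪ s.image (-·), eq_bot_iff.mpr fun x hx ↦ hp (LinearMap.ext_on hs fun a ha ↦ ?_)⟩
  simp only [mem_dual, Finset.mem_coe, Finset.forall_mem_union, Finset.forall_mem_image, map_neg,
    LinearMap.neg_apply, Left.nonneg_neg_iff] at hx
  simpa only [LinearMap.flip_apply, LinearMap.zero_apply, map_zero] using
    le_antisymm (hx.2 ha) (hx.1 a ha)

variable {K M N : Type*} [Field K] [LinearOrder K] [IsStrictOrderedRing K]
  [AddCommGroup M] [Module K M] [AddCommGroup N] [Module K N] {p : M →ₗ[K] N →ₗ[K] K}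

theorem exists_sub_smul_mem_dual_iff {s : Finset M} {w x : N} :
    (∃ t : K, 0 ≤ t ∧ x - t • w ∈ dual p s) ↔
      (∀ a ∈ s, 0 ≤ p a w → 0 ≤ p a x) ∧
        ∀ a ∈ s, ∀ b ∈ s, 0 < p a w → p b w < 0 → 0 ≤ p a w * p b x - p b w * p a x := by
  simp only [mem_dual, map_sub, map_smul, smul_eq_mul, sub_nonneg, Finset.mem_coe]
  constructor
  · rintro ⟨t, ht, h⟩
    refine ⟨fun a ha haw ↦ (mul_nonneg ht haw).trans (h ha), fun a ha b hb haw hbw ↦ ?_⟩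
    calc p b w * p a x ≤ p b w * (t * p a w) := mul_le_mul_of_nonpos_left (h ha) hbw.le
      _ = p a w * (t * p b w) := by ring
      _ ≤ p a w * p b x := mul_le_mul_of_nonneg_left (h hb) haw.le
  -- Each constraint bounds `t` from below, from above, or not at all, according to the sign of
  -- `p a w`; `hcross` says that no lower bound exceeds an upper one, so take the largest lower one.
  · rintro ⟨hnonneg, hcross⟩
    let lower := insert 0 ((s.filter (p · w < 0)).image fun b ↦ p b x / p b w)
    have hlower : lower.Nonempty := Finset.insert_nonempty _ _
    refine ⟨lower.max' hlower, lower.le_max' 0 (Finset.mem_insert_self _ _), fun a ha ↦ ?_⟩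
    rcases lt_trichotomy (p a w) 0 with haw | haw | haw
    · rw [← div_le_iff_of_neg haw]
      exact lower.le_max' _ (Finset.mem_insert_of_mem
        (Finset.mem_image_of_mem _ (Finset.mem_filter.mpr ⟨ha, haw⟩)))
    · simpa only [haw, mul_zero] using hnonneg a ha haw.ge
    · rw [← le_div_iff₀ haw, Finset.max'_le_iff]
      simp only [lower, Finset.forall_mem_insert, Finset.forall_mem_image, Finset.mem_filter]
      refine ⟨div_nonneg (hnonneg a ha haw.le) haw.le, fun b ⟨hb, hbw⟩ ↦ ?_⟩
      rw [div_le_iff_of_neg hbw, div_mul_eq_mul_div, div_le_iff₀ haw, mul_comm (p a x),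
        mul_comm (p b x)]
      exact hcross a ha b hb haw hbw

theorem dualFG_sup_hull_singleton {C : PointedCone K N} (hC : C.DualFG p) (w : N) :
    (C ⊔ hull K {w}).DualFG p := by
  classical
  obtain ⟨s, rfl⟩ := hC
  refine ⟨s.filter (0 ≤ p · w) ∪ ((s.filter (0 < p · w)) ×ˢ (s.filter (p · w < 0))).image
    fun ab ↦ p ab.1 w • ab.2 - p ab.2 w • ab.1, ?_⟩
  ext x
  rw [mem_sup_hull_singleton, exists_sub_smul_mem_dual_iff]
  simp only [mem_dual, Finset.mem_coe, Finset.forall_mem_union, Finset.forall_mem_image,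
    Finset.mem_filter, Finset.mem_product, Prod.forall, map_sub, map_smul, LinearMap.sub_apply,
    LinearMap.smul_apply, smul_eq_mul, and_imp]
  exact and_congr_right fun _ ↦
    ⟨fun h a ha b hb haw hbw ↦ h a b ha haw hb hbw, fun h a b ha haw hb hbw ↦ h a ha b hb haw hbw⟩

theorem dualFG_of_fg [Module.Finite K M] (hp : Function.Injective p.flip) {C : PointedCone K N}
    (hC : C.FG) : C.DualFG p := by
  suffices ∀ D : PointedCone K N, D.DualFG p → (D ⊔ C).DualFG p by
    simpa only [bot_sup_eq] using this ⊥ (dualFG_bot hp)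
  induction C, hC using Submodule.fg_induction with
  | singleton w => exact fun D hD ↦ dualFG_sup_hull_singleton hD w
  | sup C₁ C₂ _ _ ih₁ ih₂ => exact fun D hD ↦ sup_assoc D C₁ C₂ ▸ ih₂ _ (ih₁ _ hD)

theorem exists_sub_smul_mem_dual_apply_eq_zero {s : Finset M} {w x : N} (hx : x ∈ dual p s)
    (hw : -w ∉ dual p s) :
    ∃ t : K, 0 ≤ t ∧ x - t • w ∈ dual p s ∧ ∃ a ∈ s, 0 < p a w ∧ p a (x - t • w) = 0 := by
  simp only [mem_dual, map_sub, map_neg, map_smul, smul_eq_mul, sub_nonneg, Finset.mem_coe,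
    not_forall, Left.nonneg_neg_iff, not_le, exists_prop] at hx hw ⊢
  obtain ⟨a, ha, hmin⟩ := (s.filter (0 < p · w)).exists_min_image (fun a ↦ p a x / p a w)
    (by simpa only [Finset.filter_nonempty_iff] using hw)
  obtain ⟨has, haw⟩ := Finset.mem_filter.mp ha
  have ht : 0 ≤ p a x / p a w := div_nonneg (hx has) haw.le
  refine ⟨p a x / p a w, ht, fun b hb ↦ ?_, a, has, haw,
    by rw [div_mul_cancel₀ _ haw.ne', sub_self]⟩
  rcases le_or_gt (p b w) 0 with hbw | hbw
  · exact (mul_nonpos_of_nonneg_of_nonpos ht hbw).trans (hx hb)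
  · exact (le_div_iff₀ hbw).mp (hmin b (Finset.mem_filter.mpr ⟨hb, hbw⟩))

variable {E : Type*} [NormedAddCommGroup E] [InnerProductSpace ℝ E] [FiniteDimensional ℝ E]

theorem dualFG_innerₗ_of_fg {C : PointedCone ℝ E} (hC : C.FG) : C.DualFG (innerₗ E) :=
  dualFG_of_fg (fun _ _ h ↦ ext_inner_left ℝ fun a ↦ LinearMap.congr_fun h a) hC

theorem isClosed_of_fg {C : PointedCone ℝ E} (hC : C.FG) : IsClosed (C : Set E) := by
  obtain ⟨s, rfl⟩ := dualFG_innerₗ_of_fg hC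
  exact isClosed_dual fun a ↦ continuous_const.inner continuous_id

end Weyl

section Span

theorem linearIndependent_of_mem_of_notMem {K E : Type*} [DivisionRing K] [AddCommGroup E]
    [Module K E] {m : ℕ} {V : Fin (m + 1) → Submodule K E} (hV : Monotone V) {w : Fin m → E}
    (hmem : ∀ i, w i ∈ V i.succ) (hnotMem : ∀ i, w i ∉ V i.castSucc) : LinearIndependent K w := by
  induction m with
  | zero => exact linearIndependent_empty_type
  | succ m ih =>
    refine linearIndependent_finSucc'.mpr ⟨ih (hV.comp Fin.strictMono_castSucc.monotone)
      (fun i ↦ hmem i.castSucc) fun i ↦ hnotMem i.castSucc, fun hlast ↦ hnotMem (Fin.last m) ?_⟩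
    refine Submodule.span_le.mpr (Set.range_subset_iff.mpr fun i ↦ ?_) hlast
    exact hV (Fin.castSucc_le_castSucc_iff.mpr (Fin.le_last i.succ)) (hmem i.castSucc)

theorem vectorSpan_eq_span_of_zero_mem {K V : Type*} [Ring K] [AddCommGroup V] [Module K V]
    {s : Set V} (h : 0 ∈ s) : vectorSpan K s = Submodule.span K s := by
  simp only [vectorSpan_eq_span_vsub_set_right K h, vsub_eq_sub, sub_zero, Set.image_id']

theorem vectorSpan_convexHull {K V : Type*} [Ring K] [PartialOrder K] [IsOrderedRing K]
    [AddCommGroup V] [Module K V] (s : Set V) :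
    vectorSpan K (convexHull K s) = vectorSpan K s := by
  rw [← direction_affineSpan, affineSpan_convexHull, direction_affineSpan]

end Span

section ConvexBody

open Metric

theorem nonempty_homeomorph_image_of_isCompact {X Y : Type*} [TopologicalSpace X]
    [TopologicalSpace Y] [T2Space Y] {s : Set X} {f : X → Y} (hs : IsCompact s)
    (hf : ContinuousOn f s) (hinj : s.InjOn f) : Nonempty (s ≃ₜ f '' s) := by
  have := isCompact_iff_compactSpace.mp hs
  exact ⟨(hf.domRestrict.isClosedEmbedding hinj.injective).isEmbedding.toHomeomorph.trans
    (.setCongr (Set.range_domRestrict f s))⟩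

variable {E : Type*} [NormedAddCommGroup E] [NormedSpace ℝ E]

theorem nonempty_homeomorph_normalize_image {s : Set E} (hs : IsCompact s) {ℓ : Module.Dual ℝ E}
    (hℓ : ∀ x ∈ s, ℓ x = 1) : Nonempty (s ≃ₜ NormedSpace.normalize '' s) := by
  have hne : ∀ x ∈ s, ‖x‖ ≠ 0 := fun x hx h ↦ by
    simpa only [norm_eq_zero.mp h, map_zero, zero_ne_one] using hℓ x hx
  refine nonempty_homeomorph_image_of_isCompact hs
    ((continuousOn_id.norm.inv₀ hne).smul continuousOn_id) fun x hx y hy hxy ↦ ?_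
  have hnorm : ‖x‖⁻¹ = ‖y‖⁻¹ := by
    simpa only [NormedSpace.normalize, map_smul, hℓ x hx, hℓ y hy, smul_eq_mul, mul_one] using
      congr_arg ℓ hxy
  rw [← NormedSpace.norm_smul_normalize x, ← NormedSpace.norm_smul_normalize y, hxy,
    inv_injective hnorm]

theorem nonempty_homeomorph_closedBall_of_interior_nonempty {s : Set E} (hconv : Convex ℝ s)
    (hcomp : IsCompact s) (hint : (interior s).Nonempty) :
    Nonempty (s ≃ₜ closedBall (0 : E) 1) := by
  obtain ⟨h, -, hclosure, -⟩ :=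
    exists_homeomorph_image_interior_closure_frontier_eq_unitBall hconv hint hcomp.isBounded
  rw [hcomp.isClosed.closure_eq] at hclosure
  exact ⟨(h.isEmbedding.homeomorphImage s).trans (.setCongr hclosure)⟩

theorem nonempty_homeomorph_closedBall_of_finrank_vectorSpan [FiniteDimensional ℝ E] {s : Set E}
    (hconv : Convex ℝ s) (hcomp : IsCompact s) (hne : s.Nonempty) {k : ℕ}
    (hk : Module.finrank ℝ (vectorSpan ℝ s) = k) :
    Nonempty (s ≃ₜ closedBall (0 : Euc k) 1) := by
  have := hne.to_subtype
  let A := affineSpan ℝ s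
  let origin : A := ⟨hne.some, subset_affineSpan ℝ s hne.some_mem⟩
  have hdim : Module.finrank ℝ A.direction = Module.finrank ℝ (Euc k) := by
    rw [finrank_euclideanSpace_fin, ← hk, direction_affineSpan]
  let φ : A ≃ᴬ[ℝ] Euc k := (AffineIsometryEquiv.constVSub ℝ origin).toContinuousAffineEquiv.trans
    (ContinuousLinearEquiv.ofFinrankEq hdim).toContinuousAffineEquiv
  let f : Euc k →ᵃ[ℝ] E := A.subtype.comp φ.symm.toAffineEquiv.toAffineMap
  have hf : Topology.IsEmbedding f :=
    Topology.IsEmbedding.subtypeVal.comp φ.symm.toHomeomorph.isEmbedding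
  have hsf : s ⊆ Set.range f := fun x hx ↦
    ⟨φ ⟨x, subset_affineSpan ℝ s hx⟩, congr_arg Subtype.val (φ.symm_apply_apply _)⟩
  have hint : (interior (f ⁻¹' s)).Nonempty := by
    have hpre : f ⁻¹' s = φ.symm.toHomeomorph ⁻¹' ((↑) ⁻¹' s) := rfl
    rw [hpre, ← φ.symm.toHomeomorph.preimage_interior]
    exact (((intrinsicInterior_nonempty hconv).mpr hne).of_image).preimage φ.symm.surjective
  obtain ⟨h⟩ := nonempty_homeomorph_closedBall_of_interior_nonempty (hconv.affine_preimage f)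
    (hf.isInducing.isCompact_preimage' hcomp hsf) hint
  exact ⟨(Homeomorph.setCongr (Set.image_preimage_eq_of_subset hsf)).symm.trans
    ((hf.homeomorphImage _).symm.trans h)⟩

theorem normalize_mem {C : PointedCone ℝ E} {x : E} (hx : x ∈ C) : NormedSpace.normalize x ∈ C :=
  C.smul_mem (inv_nonneg.mpr (norm_nonneg x)) hx

theorem span_inter_closedBall (C : PointedCone ℝ E) :
    Submodule.span ℝ (C ∩ closedBall (0 : E) 1) = Submodule.span ℝ (C : Set E) := by
  refine (Submodule.span_mono Set.inter_subset_left).antisymm (Submodule.span_le.mpr fun x hx ↦ ?_)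
  rw [SetLike.mem_coe, ← NormedSpace.norm_smul_normalize x]
  refine Submodule.smul_mem _ _ (Submodule.subset_span ⟨normalize_mem hx, ?_⟩)
  rw [mem_closedBall_zero_iff, NormedSpace.normalize, norm_smul, norm_inv, norm_norm]
  exact inv_mul_le_one

theorem nonempty_homeomorph_inter_closedBall [FiniteDimensional ℝ E]
    {C : PointedCone ℝ E} (hC : IsClosed (C : Set E)) {k : ℕ}
    (hk : Module.finrank ℝ (Submodule.span ℝ (C : Set E)) = k) :
    Nonempty ((C ∩ closedBall (0 : E) 1 : Set E) ≃ₜ closedBall (0 : Euc k) 1) := by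
  have h0 : (0 : E) ∈ (C ∩ closedBall (0 : E) 1 : Set E) :=
    ⟨C.zero_mem, mem_closedBall_self zero_le_one⟩
  refine nonempty_homeomorph_closedBall_of_finrank_vectorSpan
    (C.convex.inter (convex_closedBall 0 1))
    ((isCompact_closedBall 0 1).inter_left hC) ⟨0, h0⟩ ?_
  rw [vectorSpan_eq_span_of_zero_mem h0, span_inter_closedBall, hk]

end ConvexBody

section ConeOf

open Metric

variable {n k : ℕ}

theorem coneOf_eq_hull {m : ℕ} (w : Fin m → Euc n) :
    coneOf w = PointedCone.hull ℝ (Set.range w) := by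
  ext x
  rw [SetLike.mem_coe, PointedCone.hull, Submodule.mem_span_range_iff_exists_fun]
  exact ⟨fun ⟨μ, hμ, hx⟩ ↦ ⟨fun i ↦ ⟨μ i, hμ i⟩, hx.symm⟩,
    fun ⟨c, hc⟩ ↦ ⟨fun i ↦ c i, fun i ↦ (c i).2, hc.symm⟩⟩

theorem mem_coneOf_snoc {m : ℕ} {w : Fin m → Euc n} {v x : Euc n} :
    x ∈ coneOf (Fin.snoc w v : Fin (m + 1) → Euc n) ↔ ∃ t : ℝ, 0 ≤ t ∧ x - t • v ∈ coneOf w := by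
  simp only [coneOf_eq_hull, Fin.range_snoc, PointedCone.hull, Submodule.span_insert, sup_comm,
    SetLike.mem_coe, ← mem_sup_hull_singleton]

theorem coneOf_inter_sphere {m : ℕ} {w : Fin m → Euc n} (hw : 0 ∉ convexHull ℝ (Set.range w)) :
    coneOf w ∩ sphere 0 1 = NormedSpace.normalize '' convexHull ℝ (Set.range w) := by
  refine Set.Subset.antisymm ?_ (Set.image_subset_iff.mpr fun y hy ↦ ⟨?_, ?_⟩)
  · rintro _ ⟨⟨μ, hμ, rfl⟩, hx⟩
    have hsum : 0 < ∑ i, μ i := by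
      refine (Finset.sum_nonneg fun i _ ↦ hμ i).lt_of_ne' fun h ↦ ?_
      have hμ0 := (Finset.sum_eq_zero_iff_of_nonneg fun i _ ↦ hμ i).mp h
      have hx0 : ∑ i, μ i • w i = 0 := Finset.sum_eq_zero fun i hi ↦ by rw [hμ0 i hi, zero_smul]
      exact ne_of_mem_sphere hx one_ne_zero hx0
    refine ⟨Finset.univ.centerMass μ w, Finset.univ.centerMass_mem_convexHull (fun i _ ↦ hμ i) hsum
      fun i _ ↦ Set.mem_range_self i, ?_⟩
    rw [Finset.centerMass, NormedSpace.normalize_smul_of_pos (inv_pos.mpr hsum),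
      NormedSpace.normalize_eq_self_of_norm_eq_one (mem_sphere_zero_iff_norm.mp hx)]
  · rw [coneOf_eq_hull]
    exact normalize_mem (convexHull_min Submodule.subset_span (PointedCone.convex _) hy)
  · rw [mem_sphere_zero_iff_norm, NormedSpace.norm_normalize_eq_one_iff]
    exact ne_of_mem_of_not_mem hy hw

theorem nonempty_homeomorph_coneOf_inter_closedBall {w : Fin k → Euc n}
    (hw : LinearIndependent ℝ w) :
    Nonempty ((coneOf w ∩ closedBall 0 1 : Set (Euc n)) ≃ₜ closedBall (0 : Euc k) 1) := by
  have hspan : Submodule.span ℝ (PointedCone.hull ℝ (Set.range w) : Set (Euc n)) =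
      Submodule.span ℝ (Set.range w) := Submodule.span_span_of_tower ..
  rw [coneOf_eq_hull]
  refine nonempty_homeomorph_inter_closedBall
    (isClosed_of_fg (Submodule.fg_span (Set.finite_range w))) ?_
  rw [hspan, finrank_span_eq_card hw, Fintype.card_fin]

theorem nonempty_homeomorph_coneOf_inter_sphere {w : Fin (k + 1) → Euc n}
    (hw : LinearIndependent ℝ w) :
    Nonempty ((coneOf w ∩ sphere 0 1 : Set (Euc n)) ≃ₜ closedBall (0 : Euc k) 1) := by
  obtain ⟨ℓ, hℓw⟩ := Module.exists_dual_forall_apply_eq_one (hw.linearIndepOn (s := Set.univ))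
  have hℓ : convexHull ℝ (Set.range w) ⊆ {x | ℓ x = 1} :=
    convexHull_min (Set.range_subset_iff.mpr fun i ↦ hℓw i trivial)
      (convex_hyperplane ℓ.isLinear 1)
  have hcomp : IsCompact (convexHull ℝ (Set.range w)) := (Set.finite_range w).isCompact_convexHull ℝ
  obtain ⟨h₁⟩ := nonempty_homeomorph_normalize_image hcomp hℓ
  obtain ⟨h₂⟩ := nonempty_homeomorph_closedBall_of_finrank_vectorSpan (k := k)
    (convex_convexHull ℝ _) hcomp (Set.range_nonempty w).convexHull (by
      rw [vectorSpan_convexHull]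
      exact hw.affineIndependent.finrank_vectorSpan (Fintype.card_fin _))
  rw [coneOf_inter_sphere fun h0 ↦ zero_ne_one ((map_zero ℓ).symm.trans (hℓ h0))]
  exact ⟨h₁.symm.trans h₂⟩

end ConeOf

section Fan

variable {n : ℕ} {Δ : Set (Set (Euc n))} {u : Set (Euc n) → Euc n} {σ τ : Set (Euc n)}

/-- A fan of polyhedral cones, not necessarily rational: `IsFan` with the generators of the cones
allowed to be arbitrary real vectors. -/
structure IsPolyhedralFan (Δ : Set (Set (Euc n))) : Prop where
  finite : Δ.Finite
  fg : ∀ σ ∈ Δ, ∃ C : PointedCone ℝ (Euc n), C.FG ∧ (C : Set (Euc n)) = σ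
  strictconv : ∀ σ ∈ Δ, IsStrictlyConvexCone σ
  face_mem : ∀ σ ∈ Δ, ∀ τ, IsFaceOf τ σ → τ ∈ Δ
  inter_face : ∀ σ ∈ Δ, ∀ τ ∈ Δ, IsFaceOf (σ ∩ τ) σ ∧ IsFaceOf (σ ∩ τ) τ

/-- The choice function `u` assigns to every one-dimensional cone of `Δ` a nonzero vector of that
cone, of any length. -/
def IsRayGeneratorChoice (Δ : Set (Set (Euc n))) (u : Set (Euc n) → Euc n) : Prop :=
  ∀ ρ ∈ Δ, coneDim ρ = 1 → u ρ ∈ ρ ∧ u ρ ≠ 0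

/-- The set of rays of `σ`, that is, the one-dimensional faces of `σ` in `Δ`: the index set of the
sum defining `vVec Δ u σ`. -/
def raysOf (Δ : Set (Set (Euc n))) (σ : Set (Euc n)) : Set (Set (Euc n)) :=
  {ρ | ρ ∈ Δ ∧ IsFaceOf ρ σ ∧ coneDim ρ = 1}

theorem IsFan.isPolyhedralFan (hΔ : IsFan Δ) : IsPolyhedralFan Δ where
  finite := hΔ.finite
  fg σ hσ := by
    obtain ⟨k, v, -, hv⟩ := hΔ.poly σ hσ
    exact ⟨_, Submodule.fg_span (Set.finite_range v), (coneOf_eq_hull v).symm.trans hv.symm⟩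
  strictconv := hΔ.strictconv
  face_mem := hΔ.face_mem
  inter_face := hΔ.inter_face

theorem IsUnitVecChoice.isRayGeneratorChoice (hu : IsUnitVecChoice Δ u) :
    IsRayGeneratorChoice Δ u := fun ρ hρ hdim ↦
  ⟨(hu ρ hρ hdim).1, ne_zero_of_norm_ne_zero ((hu ρ hρ hdim).2.trans_ne one_ne_zero)⟩

theorem IsFaceOf.subset (h : IsFaceOf τ σ) : τ ⊆ σ := by
  obtain ⟨a, -, rfl⟩ := h
  exact Set.inter_subset_left

namespace IsPolyhedralFan

theorem isFaceOf_of_subset (hΔ : IsPolyhedralFan Δ) (hτ : τ ∈ Δ) (hσ : σ ∈ Δ) (h : τ ⊆ σ) :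
    IsFaceOf τ σ := by
  simpa only [Set.inter_eq_left.mpr h] using (hΔ.inter_face τ hτ σ hσ).2

@[elab_as_elim]
theorem ssubset_induction (hΔ : IsPolyhedralFan Δ) {motive : ∀ σ, σ ∈ Δ → Prop}
    (ih : ∀ (σ) (hσ : σ ∈ Δ), (∀ (τ) (hτ : τ ∈ Δ), τ ⊂ σ → motive τ hτ) → motive σ hσ)
    (σ : Set (Euc n)) (hσ : σ ∈ Δ) : motive σ hσ :=
  (hΔ.finite.wellFoundedOn (r := (· ⊂ ·))).induction (P := fun σ ↦ ∀ hσ, motive σ hσ) hσ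
    (fun σ _ h hσ ↦ ih σ hσ fun τ hτ hτσ ↦ h τ hτ hτσ hτ) hσ

theorem zero_mem (hΔ : IsPolyhedralFan Δ) (hσ : σ ∈ Δ) : (0 : Euc n) ∈ σ :=
  ((hΔ.strictconv σ hσ).superset rfl).1

theorem exists_sub_smul_mem_ssubset (hΔ : IsPolyhedralFan Δ) (hσ : σ ∈ Δ) {x w : Euc n}
    (hx : x ∈ σ) (hw : w ∈ σ) (hw0 : w ≠ 0) :
    ∃ t : ℝ, 0 ≤ t ∧ ∃ τ ∈ Δ, τ ⊂ σ ∧ x - t • w ∈ τ := by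
  obtain ⟨C, hC, rfl⟩ := hΔ.fg σ hσ
  obtain ⟨s, rfl⟩ := dualFG_innerₗ_of_fg hC
  have hneg : -w ∉ PointedCone.dual (innerₗ (Euc n)) s := fun h ↦
    hw0 ((hΔ.strictconv _ hσ).subset ⟨hw, h⟩)
  obtain ⟨t, ht, hxt, a, ha, haw, hax⟩ := exists_sub_smul_mem_dual_apply_eq_zero hx hneg
  have haσ : a ∈ dualCone (PointedCone.dual (innerₗ (Euc n)) s : Set (Euc n)) := fun _ hy ↦ hy ha
  have hface : IsFaceOf _ _ := ⟨a, haσ, rfl⟩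
  exact ⟨t, ht, _, hΔ.face_mem _ hσ _ hface,
    hface.subset.ssubset_of_mem_notMem hw fun h ↦ haw.ne' h.2, hxt, hax⟩

theorem singleton_zero_mem (hΔ : IsPolyhedralFan Δ) (hσ : σ ∈ Δ) : {0} ∈ Δ := by
  induction σ, hσ using hΔ.ssubset_induction with | ih σ hσ ih
  by_cases h : ∃ w ∈ σ, w ≠ 0
  · obtain ⟨w, hw, hw0⟩ := h
    obtain ⟨-, -, τ, hτ, hτσ, -⟩ := hΔ.exists_sub_smul_mem_ssubset hσ hw hw hw0
    exact ih τ hτ hτσ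
  · push Not at h
    rwa [← Set.eq_singleton_iff_unique_mem.mpr ⟨hΔ.zero_mem hσ, h⟩]

theorem raysOf_subset_raysOf (hΔ : IsPolyhedralFan Δ) (hσ : σ ∈ Δ) (h : τ ⊆ σ) :
    raysOf Δ τ ⊆ raysOf Δ σ := fun _ ⟨hρ, hρτ, hdim⟩ ↦
  ⟨hρ, hΔ.isFaceOf_of_subset hρ hσ (hρτ.subset.trans h), hdim⟩

theorem mem_raysOf_self (hΔ : IsPolyhedralFan Δ) (hσ : σ ∈ Δ) (hdim : coneDim σ = 1) :
    σ ∈ raysOf Δ σ := ⟨hσ, hΔ.isFaceOf_of_subset hσ hσ subset_rfl, hdim⟩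

theorem subset_span_raysOf (hΔ : IsPolyhedralFan Δ) (hu : IsRayGeneratorChoice Δ u) (hσ : σ ∈ Δ) :
    σ ⊆ Submodule.span ℝ (u '' raysOf Δ σ) := by
  induction σ, hσ using hΔ.ssubset_induction with | ih σ hσ ih
  intro x hx
  have mem_of_proper {τ y} (hτ : τ ∈ Δ) (hτσ : τ ⊂ σ) (hy : y ∈ τ) :
      y ∈ Submodule.span ℝ (u '' raysOf Δ σ) :=
    Submodule.span_mono (Set.image_mono (hΔ.raysOf_subset_raysOf hσ hτσ.subset)) (ih τ hτ hτσ hy)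
  by_cases hx0 : x = 0
  · exact hx0 ▸ Submodule.zero_mem _
  by_cases hspan : σ ⊆ Submodule.span ℝ {x}
  · have hline : Submodule.span ℝ σ = Submodule.span ℝ {x} :=
      (Submodule.span_le.mpr hspan).antisymm (Submodule.span_mono (Set.singleton_subset_iff.mpr hx))
    have hdim : coneDim σ = 1 := by rw [coneDim, hline, finrank_span_singleton hx0]
    obtain ⟨huσ, hu0⟩ := hu σ hσ hdim
    obtain ⟨c, hc⟩ := Submodule.mem_span_singleton.mp (hspan huσ)
    have hc0 : c ≠ 0 := fun h ↦ hu0 (by rw [← hc, h, zero_smul])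
    rw [← inv_smul_smul₀ hc0 x, hc]
    exact Submodule.smul_mem _ _
      (Submodule.subset_span (Set.mem_image_of_mem u (hΔ.mem_raysOf_self hσ hdim)))
  -- Write `x = (x - r • y) + r • y`, where `y = z - t • x` and `x - r • y` lie in proper faces.
  · obtain ⟨z, hz, hzx⟩ := Set.not_subset.mp hspan
    obtain ⟨t, -, τ, hτ, hτσ, hy⟩ := hΔ.exists_sub_smul_mem_ssubset hσ hz hx hx0
    have hy0 : z - t • x ≠ 0 := fun h ↦
      hzx (Submodule.mem_span_singleton.mpr ⟨t, (sub_eq_zero.mp h).symm⟩)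
    obtain ⟨r, -, τ', hτ', hτσ', hxr⟩ :=
      hΔ.exists_sub_smul_mem_ssubset hσ hx (hτσ.subset hy) hy0
    rw [← sub_add_cancel x (r • (z - t • x))]
    exact add_mem (mem_of_proper hτ' hτσ' hxr)
      (Submodule.smul_mem _ _ (mem_of_proper hτ hτσ hy))

theorem vVec_mem (hΔ : IsPolyhedralFan Δ) (hu : IsRayGeneratorChoice Δ u) (hσ : σ ∈ Δ) :
    vVec Δ u σ ∈ σ := by
  obtain ⟨C, -, rfl⟩ := hΔ.fg σ hσ
  exact finsum_mem_induction (· ∈ C) C.zero_mem (fun _ _ ↦ add_mem)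
    fun ρ ⟨hρ, hρσ, hdim⟩ ↦ hρσ.subset (hu ρ hρ hdim).1

theorem inner_eq_zero_of_inner_vVec_eq_zero (hΔ : IsPolyhedralFan Δ)
    (hu : IsRayGeneratorChoice Δ u) (hσ : σ ∈ Δ) {a : Euc n} (ha : a ∈ dualCone σ)
    (hav : ⟪a, vVec Δ u σ⟫ = 0) {x : Euc n} (hx : x ∈ σ) : ⟪a, x⟫ = 0 := by
  have hfin : (raysOf Δ σ).Finite := hΔ.finite.subset fun _ h ↦ h.1
  have hnonneg : ∀ ρ ∈ hfin.toFinset, 0 ≤ ⟪a, u ρ⟫ := fun ρ hρ ↦ by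
    obtain ⟨hρΔ, hρσ, hdim⟩ := hfin.mem_toFinset.mp hρ
    exact ha _ (hρσ.subset (hu ρ hρΔ hdim).1)
  have hrays : ∀ ρ ∈ hfin.toFinset, ⟪a, u ρ⟫ = 0 := by
    rw [← Finset.sum_eq_zero_iff_of_nonneg hnonneg, ← inner_sum,
      ← finsum_mem_eq_finite_toFinset_sum u hfin]
    exact hav
  have hspan : Submodule.span ℝ (u '' raysOf Δ σ) ≤ (innerₗ (Euc n) a).ker :=
    Submodule.span_le.mpr (Set.forall_mem_image.mpr fun ρ hρ ↦ hrays ρ (hfin.mem_toFinset.mpr hρ))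
  exact hspan (hΔ.subset_span_raysOf hu hσ hx)

theorem vVec_notMem_span (hΔ : IsPolyhedralFan Δ) (hu : IsRayGeneratorChoice Δ u) (hτ : τ ∈ Δ)
    (hσ : σ ∈ Δ) (h : τ ⊂ σ) : vVec Δ u σ ∉ Submodule.span ℝ τ := by
  obtain ⟨a, ha, hτa⟩ := hΔ.isFaceOf_of_subset hτ hσ h.subset
  intro hv
  have hspan : Submodule.span ℝ τ ≤ (innerₗ (Euc n) a).ker :=
    Submodule.span_le.mpr fun x hx ↦ (hτa.subset hx).2
  exact h.not_subset fun x hx ↦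
    hτa ▸ ⟨hx, hΔ.inner_eq_zero_of_inner_vVec_eq_zero hu hσ ha (hspan hv) hx⟩

theorem coneOf_subset (hΔ : IsPolyhedralFan Δ) (hσ : σ ∈ Δ) {m : ℕ} {w : Fin m → Euc n}
    (hw : ∀ i, w i ∈ σ) : coneOf w ⊆ σ := by
  obtain ⟨C, -, rfl⟩ := hΔ.fg σ hσ
  rw [coneOf_eq_hull]
  exact Submodule.span_le.mpr (Set.range_subset_iff.mpr hw)

theorem linearIndependent_vVec (hΔ : IsPolyhedralFan Δ) (hu : IsRayGeneratorChoice Δ u) {m : ℕ}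
    {τ : Fin (m + 1) → Set (Euc n)} (hτ : ∀ i, τ i ∈ Δ) (hmono : StrictMono τ) :
    LinearIndependent ℝ fun i : Fin m ↦ vVec Δ u (τ i.succ) :=
  linearIndependent_of_mem_of_notMem (V := fun i ↦ Submodule.span ℝ (τ i))
    (fun _ _ h ↦ Submodule.span_mono (hmono.monotone h))
    (fun i ↦ Submodule.subset_span (hΔ.vVec_mem hu (hτ i.succ)))
    fun i ↦ hΔ.vVec_notMem_span hu (hτ _) (hτ _) (hmono i.castSucc_lt_succ)

end IsPolyhedralFan

theorem IsFlag.strictMono {k : ℕ} {τ : Fin (k + 1) → Set (Euc n)} (hτ : IsFlag Δ τ) :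
    StrictMono τ :=
  Fin.strictMono_iff_lt_succ.mpr fun i ↦ (hτ.2 i).1.subset.ssubset_of_ne (hτ.2 i).2

theorem IsFlag.snoc {k : ℕ} {τ : Fin (k + 1) → Set (Euc n)} (hτ : IsFlag Δ τ) (hσ : σ ∈ Δ)
    (hface : IsFaceOf (τ (Fin.last k)) σ) (hne : τ (Fin.last k) ≠ σ) :
    IsFlag Δ (Fin.snoc τ σ : Fin (k + 2) → Set (Euc n)) := by
  refine ⟨Fin.lastCases ?_ fun i ↦ ?_, Fin.lastCases ?_ fun i ↦ ?_⟩
  · rwa [Fin.snoc_last]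
  · rw [Fin.snoc_castSucc]
    exact hτ.1 i
  · rw [Fin.snoc_castSucc, Fin.succ_last, Fin.snoc_last]
    exact ⟨hface, hne⟩
  · rw [Fin.snoc_castSucc, Fin.succ_castSucc, Fin.snoc_castSucc]
    exact hτ.2 i

theorem IsPolyhedralFan.exists_isFlag_mem_coneOf (hΔ : IsPolyhedralFan Δ)
    (hu : IsRayGeneratorChoice Δ u) (hσ : σ ∈ Δ) {x : Euc n} (hx : x ∈ σ) :
    ∃ (k : ℕ) (τ : Fin (k + 1) → Set (Euc n)), IsFlag Δ τ ∧ τ 0 = {0} ∧ τ (Fin.last k) ⊆ σ ∧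
      x ∈ coneOf fun i : Fin k ↦ vVec Δ u (τ i.succ) := by
  induction σ, hσ using hΔ.ssubset_induction generalizing x with | ih σ hσ ih
  have h0 : {0} ⊆ σ := Set.singleton_subset_iff.mpr (hΔ.zero_mem hσ)
  rcases h0.eq_or_ssubset with rfl | h0
  · exact ⟨0, fun _ ↦ {0}, ⟨fun _ ↦ hσ, fun i ↦ i.elim0⟩, rfl, subset_rfl, 0, fun _ ↦ le_rfl,
      by simpa using hx⟩
  have hv0 : vVec Δ u σ ≠ 0 := (ne_of_mem_of_not_mem (Submodule.zero_mem _)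
    (hΔ.vVec_notMem_span hu (hΔ.singleton_zero_mem hσ) hσ h0)).symm
  obtain ⟨t, ht, σ', hσ', hσ'σ, hxt⟩ :=
    hΔ.exists_sub_smul_mem_ssubset hσ hx (hΔ.vVec_mem hu hσ) hv0
  obtain ⟨k, τ, hτ, hτ0, hτσ', hxτ⟩ := ih σ' hσ' hσ'σ hxt
  have hτσ : τ (Fin.last k) ⊂ σ := hτσ'.trans_ssubset hσ'σ
  refine ⟨k + 1, Fin.snoc τ σ, hτ.snoc hσ (hΔ.isFaceOf_of_subset (hτ.1 _) hσ hτσ.subset) hτσ.ne,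
    by rw [Fin.snoc_apply_zero, hτ0], by rw [Fin.snoc_last], ?_⟩
  have htail : (fun i : Fin (k + 1) ↦
      vVec Δ u ((Fin.snoc τ σ : Fin (k + 2) → Set (Euc n)) i.succ)) =
        Fin.snoc (fun i : Fin k ↦ vVec Δ u (τ i.succ)) (vVec Δ u σ) := by
    ext1 i
    cases i using Fin.lastCases with
    | last => rw [Fin.succ_last, Fin.snoc_last, Fin.snoc_last]
    | cast i => rw [Fin.succ_castSucc, Fin.snoc_castSucc, Fin.snoc_castSucc]
  exact htail ▸ mem_coneOf_snoc.mpr ⟨t, ht, hxτ⟩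

end Fan

section Cells

open Metric

variable {n k : ℕ} {Δ : Set (Set (Euc n))} {u : Set (Euc n) → Euc n}
  {τ : Fin (k + 1) → Set (Euc n)}

theorem dSet_of_eq_singleton_zero (h : τ 0 = {0}) :
    dSet Δ u τ = coneOf (fun i : Fin k ↦ vVec Δ u (τ i.succ)) ∩ closedBall 0 1 := by
  rw [dSet, if_pos h]
  split_ifs with hk
  · subst hk
    simp [coneOf_eq_hull]
  · rfl

theorem dSet_of_ne_singleton_zero (h : τ 0 ≠ {0}) :
    dSet Δ u τ = coneOf (fun i ↦ vVec Δ u (τ i)) ∩ sphere 0 1 := if_neg h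

theorem IsFlag.nonempty_dSet_homeomorph_closedBall (hτ : IsFlag Δ τ) (hΔ : IsPolyhedralFan Δ)
    (hu : IsRayGeneratorChoice Δ u) : Nonempty (dSet Δ u τ ≃ₜ closedBall (0 : Euc k) 1) := by
  by_cases h0 : τ 0 = {0}
  · rw [dSet_of_eq_singleton_zero h0]
    exact nonempty_homeomorph_coneOf_inter_closedBall
      (hΔ.linearIndependent_vVec hu hτ.1 hτ.strictMono)
  -- Prepending `{0}` makes all cones of the flag `τ` count for linear independence.
  · rw [dSet_of_ne_singleton_zero h0]
    have hmem : {0} ∈ Δ := hΔ.singleton_zero_mem (hτ.1 0)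
    have hlt : {0} < τ 0 :=
      (Set.singleton_subset_iff.mpr (hΔ.zero_mem (hτ.1 0))).ssubset_of_ne (Ne.symm h0)
    exact nonempty_homeomorph_coneOf_inter_sphere
      (hΔ.linearIndependent_vVec (τ := Matrix.vecCons {0} τ) hu (Fin.cases hmem hτ.1)
      (hτ.strictMono.vecCons hlt))

theorem IsFlag.dSet_subset (hτ : IsFlag Δ τ) (hΔ : IsPolyhedralFan Δ)
    (hu : IsRayGeneratorChoice Δ u) : dSet Δ u τ ⊆ ⋃₀ Δ ∩ closedBall 0 1 := by
  have hv (i) : vVec Δ u (τ i) ∈ τ (Fin.last k) :=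
    hτ.strictMono.monotone (Fin.le_last i) (hΔ.vVec_mem hu (hτ.1 i))
  have hcone {m : ℕ} {f : Fin m → Fin (k + 1)} : coneOf (fun i ↦ vVec Δ u (τ (f i))) ⊆ ⋃₀ Δ :=
    (hΔ.coneOf_subset (hτ.1 _) fun i ↦ hv (f i)).trans (Set.subset_sUnion_of_mem (hτ.1 _))
  by_cases h0 : τ 0 = {0}
  · rw [dSet_of_eq_singleton_zero h0]
    exact Set.inter_subset_inter_left _ hcone
  · rw [dSet_of_ne_singleton_zero h0]
    exact Set.inter_subset_inter hcone sphere_subset_closedBall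

theorem iUnion_dSet (hΔ : IsPolyhedralFan Δ) (hu : IsRayGeneratorChoice Δ u) :
    (⋃ (k : ℕ) (τ : Fin (k + 1) → Set (Euc n)) (_ : IsFlag Δ τ), dSet Δ u τ) =
      ⋃₀ Δ ∩ closedBall 0 1 := by
  refine Set.Subset.antisymm
    (Set.iUnion_subset fun k ↦ Set.iUnion₂_subset fun τ hτ ↦ hτ.dSet_subset hΔ hu) ?_
  rintro x ⟨⟨σ, hσ, hxσ⟩, hx⟩
  obtain ⟨k, τ, hτ, hτ0, -, hxτ⟩ := hΔ.exists_isFlag_mem_coneOf hu hσ hxσ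
  simp only [Set.mem_iUnion]
  exact ⟨k, τ, hτ, dSet_of_eq_singleton_zero (u := u) hτ0 ▸ ⟨hxτ, hx⟩⟩

end Cells

theorem flag_cells_decompose_ball_general {n : ℕ}
    {Δ : Set (Set (Euc n))} (hΔ : IsPolyhedralFan Δ)
    {u : Set (Euc n) → Euc n} (hu : IsRayGeneratorChoice Δ u) :
    (∀ (k : ℕ) (τ : Fin (k + 1) → Set (Euc n)), IsFlag Δ τ →
      Nonempty (dSet Δ u τ ≃ₜ Metric.closedBall (0 : Euc k) 1)) ∧
    (⋃ (k : ℕ) (τ : Fin (k + 1) → Set (Euc n)) (_ : IsFlag Δ τ), dSet Δ u τ) =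
      ⋃₀ Δ ∩ Metric.closedBall (0 : Euc n) 1 :=
  ⟨fun _ _ hτ ↦ hτ.nonempty_dSet_homeomorph_closedBall hΔ hu, iUnion_dSet hΔ hu⟩

/-- For a complete fan `Δ` in `ℝ^n`, each cell
`d_{(τ₀,…,τ_k)}` associated to a flag of `Δ` is homeomorphic to a closed
Euclidean ball of dimension `k`, and the union of these cells over all flags
is the whole closed unit ball `B`. -/
theorem flag_cells_decompose_ball {n : ℕ}
    (Δ : Set (Set (Euc n))) (hΔ : IsCompleteFan Δ)
    (u : Set (Euc n) → Euc n) (hu : IsUnitVecChoice Δ u) :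
    (∀ (k : ℕ) (τ : Fin (k + 1) → Set (Euc n)), IsFlag Δ τ →
      Nonempty ((dSet Δ u τ : Set (Euc n)) ≃ₜ
        (Metric.closedBall (0 : Euc k) 1 : Set (Euc k)))) ∧
    (⋃ (k : ℕ) (τ : Fin (k + 1) → Set (Euc n)) (_ : IsFlag Δ τ), dSet Δ u τ) =
      Metric.closedBall (0 : Euc n) 1 := by
  simpa only [hΔ.2, Set.univ_inter] using
    flag_cells_decompose_ball_general hΔ.1.isPolyhedralFan hu.isRayGeneratorChoice

end
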